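/- arXiv:1311.1779 — 3 statements merged into one kernel-verified Lean document; each statement's English description precedes it below -/
import Mathlib

section
/- Let F be a field of characteristic p, q a power of p, n ≥ 2, 1 ≤ k < n, and a, b nonnegative integers with a·k − b·(n−k) = 1. Let M/F be a field extension and R, S ∈ M satisfy Tr_{n−k}(R) + Tr_k(S) = 1. Set u := Σ_{α=0}^{a−1} R^{q^{α·k}} + ( Σ_{β=0}^{b−1} S^{q^{β·(n−k)}} )^{q}. Then the intermediate field F(R, S) of M/F equals F(u). -/
/-- The trace polynomial `Tr_i(x) = x + x^q + ⋯ + x^{q^{i-1}}`. -/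
def Tr {R : Type*} [CommRing R] (q i : ℕ) (x : R) : R :=
  ∑ j ∈ Finset.range i, x ^ q ^ j

/-!
Let `φ` be the `q`-power Frobenius and `m = n - k`. Polynomials in `φ` with integer coefficients
are commuting additive operators. Writing `[i]_φ = 1 + φ + ⋯ + φ^(i-1)`, one has
`Tr_i(x) = [i]_φ x`, and `u = A R + φ B S` with `A = [a]_(φ^k)` and `B = [b]_(φ^m)`. The relation
`a k = b m + 1` gives `[k]_φ A = [a k]_φ = 1 + φ [b m]_φ = 1 + φ [m]_φ B`. Hence, for
`c = [m]_φ R + [k]_φ S`,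
`[k]_φ u = R + φ B c` and `[m]_φ u = A c - S`,
so `R` and `S` are polynomials in `u` as soon as `c` is a constant.
-/

section Trace

variable {M : Type*} [CommRing M]

theorem Tr_mem {σ : Type*} [SetLike σ M] [SubsemiringClass σ M] {s : σ} {x : M} (hx : x ∈ s)
    (q i : ℕ) : Tr q i x ∈ s :=
  sum_mem fun _ _ ↦ pow_mem hx _

theorem sum_pow_pow_mul_eq_Tr (q i j : ℕ) (x : M) :
    ∑ l ∈ Finset.range j, x ^ q ^ (l * i) = Tr (q ^ i) j x := by
  simp only [Tr, pow_mul']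

variable (p : ℕ) [ExpChar M p]

theorem Tr_add (e i : ℕ) (x y : M) :
    Tr (p ^ e) i (x + y) = Tr (p ^ e) i x + Tr (p ^ e) i y := by
  simp only [Tr, ← pow_mul, add_pow_expChar_pow, Finset.sum_add_distrib]

theorem Tr_pow_expChar_pow (d q i : ℕ) (x : M) :
    Tr q i (x ^ p ^ d) = Tr q i x ^ p ^ d := by
  simp only [Tr, sum_pow_char_pow, pow_right_comm x (p ^ d)]

theorem Tr_comm (d e i j : ℕ) (x : M) :
    Tr (p ^ d) i (Tr (p ^ e) j x) = Tr (p ^ e) j (Tr (p ^ d) i x) := by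
  simp only [Tr, ← pow_mul, sum_pow_char_pow]
  rw [Finset.sum_comm]
  simp only [mul_comm]

theorem Tr_succ (e i : ℕ) (x : M) :
    Tr (p ^ e) (i + 1) x = x + Tr (p ^ e) i x ^ p ^ e := by
  rw [← Tr_pow_expChar_pow, Tr, Finset.sum_range_succ', pow_zero, pow_one, add_comm]
  simp only [Tr, ← pow_mul, pow_succ']

theorem Tr_Tr_pow (e i j : ℕ) (x : M) :
    Tr (p ^ e) i (Tr ((p ^ e) ^ i) j x) = Tr (p ^ e) (j * i) x := by
  induction j with
  | zero => simp [Tr, (expChar_pos M p).ne']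
  | succ j ih =>
    calc Tr (p ^ e) i (Tr ((p ^ e) ^ i) (j + 1) x)
      _ = Tr (p ^ e) i (Tr ((p ^ e) ^ i) j x + x ^ (p ^ e) ^ (j * i)) := by
        simp only [Tr, Finset.sum_range_succ, pow_mul']
      _ = Tr (p ^ e) (j * i) x + Tr (p ^ e) i (x ^ (p ^ e) ^ (j * i)) := by
        rw [Tr_add, ih]
      _ = Tr (p ^ e) ((j + 1) * i) x := by
        simp only [Tr, Nat.succ_mul, Finset.sum_range_add, ← pow_mul, ← pow_add, ← mul_add]

end Trace

/-- The element `u = A R + φ B S` generating `F(R, S)`, with `m` standing for `n - k`. Its two sums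
are written as trace polynomials with `q ^ k` and `q ^ m` in place of `q`. -/
def traceGenerator {M : Type*} [CommRing M] (q k m a b : ℕ) (R S : M) : M :=
  Tr (q ^ k) a R + Tr (q ^ m) b S ^ q

section Generator

variable {M : Type*} [CommRing M] {k m a b : ℕ}

theorem traceGenerator_mem {σ : Type*} [SetLike σ M] [SubsemiringClass σ M] {s : σ} {R S : M}
    (hR : R ∈ s) (hS : S ∈ s) (q k m a b : ℕ) : traceGenerator q k m a b R S ∈ s :=
  add_mem (Tr_mem hR _ _) (pow_mem (Tr_mem hS _ _) _)

variable (p : ℕ) [ExpChar M p]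

theorem Tr_traceGenerator_eq_add (e : ℕ) (hab : a * k = b * m + 1) (R S : M) :
    Tr (p ^ e) k (traceGenerator (p ^ e) k m a b R S) =
      R + Tr ((p ^ e) ^ m) b (Tr (p ^ e) m R + Tr (p ^ e) k S) ^ p ^ e := by
  have hcomm (i : ℕ) (x : M) : Tr ((p ^ e) ^ m) b (Tr (p ^ e) i x) =
      Tr (p ^ e) i (Tr ((p ^ e) ^ m) b x) := by
    simp only [← pow_mul, Tr_comm p (e * m)]
  calc Tr (p ^ e) k (traceGenerator (p ^ e) k m a b R S)
    _ = Tr (p ^ e) (b * m + 1) R + Tr (p ^ e) k (Tr ((p ^ e) ^ m) b S) ^ p ^ e := by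
      rw [traceGenerator, Tr_add, Tr_Tr_pow, hab, Tr_pow_expChar_pow]
    _ = R + (Tr (p ^ e) (b * m) R + Tr (p ^ e) k (Tr ((p ^ e) ^ m) b S)) ^ p ^ e := by
      rw [Tr_succ, add_pow_expChar_pow, add_assoc]
    _ = R + Tr ((p ^ e) ^ m) b (Tr (p ^ e) m R + Tr (p ^ e) k S) ^ p ^ e := by
      rw [← Tr_Tr_pow, ← hcomm, ← hcomm, ← pow_mul, ← Tr_add]

theorem Tr_traceGenerator_add_eq (e : ℕ) (hab : a * k = b * m + 1) (R S : M) :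
    Tr (p ^ e) m (traceGenerator (p ^ e) k m a b R S) + S =
      Tr ((p ^ e) ^ k) a (Tr (p ^ e) m R + Tr (p ^ e) k S) := by
  have hcomm (i : ℕ) (x : M) : Tr (p ^ e) i (Tr ((p ^ e) ^ k) a x) =
      Tr ((p ^ e) ^ k) a (Tr (p ^ e) i x) := by
    simp only [← pow_mul, Tr_comm p e]
  calc Tr (p ^ e) m (traceGenerator (p ^ e) k m a b R S) + S
    _ = Tr (p ^ e) m (Tr ((p ^ e) ^ k) a R) + (S + Tr (p ^ e) (b * m) S ^ p ^ e) := by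
      rw [traceGenerator, Tr_add, Tr_pow_expChar_pow, Tr_Tr_pow, add_assoc, add_comm S]
    _ = Tr (p ^ e) m (Tr ((p ^ e) ^ k) a R) + Tr (p ^ e) k (Tr ((p ^ e) ^ k) a S) := by
      rw [← Tr_succ, ← hab, Tr_Tr_pow]
    _ = Tr ((p ^ e) ^ k) a (Tr (p ^ e) m R + Tr (p ^ e) k S) := by
      rw [hcomm, hcomm, ← pow_mul, ← Tr_add]

end Generator

theorem intermediateField_adjoin_eq_of_algebra_adjoin_eq {F M : Type*} [Field F] [Field M]
    [Algebra F M] {s t : Set M} (h : Algebra.adjoin F s = Algebra.adjoin F t) :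
    IntermediateField.adjoin F s = IntermediateField.adjoin F t := by
  apply le_antisymm <;> rw [IntermediateField.adjoin_le_iff]
  · exact Algebra.adjoin_le_iff.1 (h.le.trans (IntermediateField.algebra_adjoin_le_adjoin F t))
  · exact Algebra.adjoin_le_iff.1 (h.ge.trans (IntermediateField.algebra_adjoin_le_adjoin F s))

theorem stmt_5_general {p e q m k a b : ℕ} {F M : Type*} [CommRing F] [CommRing M] [Algebra F M]
    [ExpChar M p] (hq : q = p ^ e) (hab : a * k = b * m + 1) {R S : M} {c : F}
    (hRS : Tr q m R + Tr q k S = algebraMap F M c) :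
    Algebra.adjoin F {R, S} = Algebra.adjoin F {traceGenerator q k m a b R S} := by
  subst hq
  set u := traceGenerator (p ^ e) k m a b R S
  have hR : Tr (p ^ e) k u = R + Tr ((p ^ e) ^ m) b (algebraMap F M c) ^ p ^ e :=
    hRS ▸ Tr_traceGenerator_eq_add p e hab R S
  have hS : Tr (p ^ e) m u + S = Tr ((p ^ e) ^ k) a (algebraMap F M c) :=
    hRS ▸ Tr_traceGenerator_add_eq p e hab R S
  apply le_antisymm <;> apply Algebra.adjoin_le
  · have hTr (i : ℕ) : Tr (p ^ e) i u ∈ Algebra.adjoin F {u} :=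
      Tr_mem (Algebra.self_mem_adjoin_singleton F u) _ _
    have hc : algebraMap F M c ∈ Algebra.adjoin F {u} := algebraMap_mem _ c
    rw [Set.pair_subset_iff]
    constructor
    · rw [eq_sub_of_add_eq hR.symm]
      exact sub_mem (hTr k) (pow_mem (Tr_mem hc _ _) _)
    · rw [eq_sub_of_add_eq' hS]
      exact sub_mem (Tr_mem hc _ _) (hTr m)
  · rw [Set.singleton_subset_iff]
    exact traceGenerator_mem (Algebra.subset_adjoin (by simp)) (Algebra.subset_adjoin (by simp))
      _ _ _ _ _

/-- With `a·k − b·(n−k) = 1` and `Tr_{n−k}(R) + Tr_k(S) = 1` for elements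
`R, S` of an extension `M` of `F`, the element
`u := Σ_{α<a} R^{q^{αk}} + (Σ_{β<b} S^{q^{β(n−k)}})^q` satisfies `F(R,S) = F(u)`. -/
theorem stmt_5 (p e q n k a b : ℕ) (hp : p.Prime) (he : 0 < e) (hq : q = p ^ e)
    (hn : 2 ≤ n) (hk1 : 1 ≤ k) (hkn : k < n) (hab : a * k = b * (n - k) + 1)
    (F M : Type*) [Field F] [CharP F p] [Field M] [Algebra F M]
    (R S : M) (hRS : Tr q (n - k) R + Tr q k S = 1)
    (u : M)
    (hu : u = (∑ α ∈ Finset.range a, R ^ q ^ (α * k))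
              + (∑ β ∈ Finset.range b, S ^ q ^ (β * (n - k))) ^ q) :
    IntermediateField.adjoin F {R, S} = IntermediateField.adjoin F {u} := by
  have : ExpChar F p := ExpChar.prime hp
  have : ExpChar M p := expChar_of_injective_algebraMap (algebraMap F M).injective p
  have hgen : u = traceGenerator q k (n - k) a b R S := by
    rw [hu, sum_pow_pow_mul_eq_Tr, sum_pow_pow_mul_eq_Tr, traceGenerator]
  rw [hgen]
  exact intermediateField_adjoin_eq_of_algebra_adjoin_eq
    (stmt_5_general hq hab (hRS.trans (map_one (algebraMap F M)).symm))
end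

section
/- Let L be a field of characteristic p, q a power of p, n ≥ 2, 1 ≤ k < n, and a, b nonnegative integers with a·k − b·(n−k) = 1. Suppose x, y ∈ L are both nonzero and satisfy Σ_{i=0}^{n−k−1} y^{q^i} / x^{q^{k+i}} + Σ_{j=0}^{k−1} y^{q^{n−k+j}} / x^{q^j} = 1. Set R := y / x^{q^k}, S := y^{q^{n−k}} / x and u := Σ_{α=0}^{a−1} R^{q^{α·k}} + ( Σ_{β=0}^{b−1} S^{q^{β·(n−k)}} )^{q}. Then Tr_k(u) ≠ b, Tr_k(u)^{q^{n−k}} ≠ b, and y^{q^n − 1} = −(Tr_{n−k}(u)^{q^k} − a)/(Tr_k(u) − b) and x^{q^n − 1} = −(Tr_{n−k}(u) − a)/(Tr_k(u)^{q^{n−k}} − b). -/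
/-!
Regard `L` as a module over its additive endomorphisms and let `φ` be the `q`-power Frobenius. With
`T_i = 1 + φ + ⋯ + φ^(i-1)` and `m = n - k`, the hypothesis on `x` and `y` reads
`T_m R + T_k S = 1`, and `u = A R + φ B S` where `A = ∑_{α<a} φ^(αk)` and `B = ∑_{β<b} φ^(βm)`.
Since `ak = bm + 1`, there is a Bézout identity `A T_k = T_{ak} = 1 + φ T_{bm} = 1 + φ B T_m`
between commuting operators, whence `T_k u = R + φ B (T_m R + T_k S) = R + b` and
`T_m u = A (T_m R + T_k S) - S = a - S`. Both quotients in the conclusion are then monomials in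
`x` and `y`.
-/

open Finset

section GeomSum

variable {A : Type*} [Semiring A] (φ : A)

lemma commute_sum_pow {ι κ : Type*} (s : Finset ι) (t : Finset κ) (f : ι → ℕ) (g : κ → ℕ) :
    Commute (∑ i ∈ s, φ ^ f i) (∑ j ∈ t, φ ^ g j) :=
  Commute.sum_left _ _ _ fun i _ ↦ Commute.sum_right _ _ _ fun j _ ↦
    Commute.pow_pow_self φ (f i) (g j)

lemma sum_pow_mul_geom_sum (a k : ℕ) :
    (∑ α ∈ range a, φ ^ (α * k)) * ∑ j ∈ range k, φ ^ j = ∑ j ∈ range (a * k), φ ^ j := by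
  induction a with
  | zero => simp
  | succ a ih =>
    rw [sum_range_succ, add_mul, ih, add_one_mul, sum_range_add, mul_sum]
    simp only [pow_add]

lemma sum_pow_mul_geom_sum_eq_one_add {a b k m : ℕ} (hab : a * k = b * m + 1) :
    (∑ α ∈ range a, φ ^ (α * k)) * ∑ j ∈ range k, φ ^ j =
      1 + φ * ((∑ β ∈ range b, φ ^ (β * m)) * ∑ i ∈ range m, φ ^ i) := by
  rw [sum_pow_mul_geom_sum, sum_pow_mul_geom_sum, hab, geom_sum_succ, add_comm]

variable {φ} {M : Type*} [AddCommMonoid M] [Module A M] {c r s u : M} {a b k m : ℕ}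

lemma sum_pow_smul_of_smul_eq_self (hc : φ • c = c) {ι : Type*} (t : Finset ι) (f : ι → ℕ) :
    (∑ i ∈ t, φ ^ f i) • c = #t • c := by
  have pow_smul_eq (j : ℕ) : φ ^ j • c = c := by
    induction j with
    | zero => rw [pow_zero, one_smul]
    | succ j ih => rw [pow_succ, mul_smul, hc, ih]
  simp only [sum_smul, pow_smul_eq, sum_const]

theorem geom_sum_smul_eq_add_nsmul (hab : a * k = b * m + 1) (hc : φ • c = c)
    (hrs : (∑ i ∈ range m, φ ^ i) • r + (∑ j ∈ range k, φ ^ j) • s = c)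
    (hu : u = (∑ α ∈ range a, φ ^ (α * k)) • r + φ • (∑ β ∈ range b, φ ^ (β * m)) • s) :
    (∑ j ∈ range k, φ ^ j) • u = r + b • c := by
  set T : ℕ → A := fun i ↦ ∑ j ∈ range i, φ ^ j
  set P := ∑ α ∈ range a, φ ^ (α * k)
  set Q := ∑ β ∈ range b, φ ^ (β * m) with hQ
  have hTP : Commute (T k) P := commute_sum_pow φ _ _ _ _
  have hTQ : Commute (T k) Q := commute_sum_pow φ _ _ _ _
  have hTφ : Commute (T k) φ := Commute.sum_left _ _ _ fun j _ ↦ Commute.pow_self φ j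
  calc T k • u = (P * T k) • r + (φ * (Q * T k)) • s := by
        rw [hu, smul_add, ← hTP.eq, ← hTQ.eq, ← mul_assoc, ← hTφ.eq]
        simp only [mul_smul]
    _ = r + φ • Q • (T m • r + T k • s) := by
        rw [sum_pow_mul_geom_sum_eq_one_add φ hab]
        simp only [add_smul, one_smul, mul_smul, smul_add, add_assoc, T, Q]
    _ = r + b • c := by
        rw [hrs, hQ, sum_pow_smul_of_smul_eq_self hc, card_range, smul_comm, hc]

theorem geom_sum_smul_add_eq_nsmul (hab : a * k = b * m + 1) (hc : φ • c = c)
    (hrs : (∑ i ∈ range m, φ ^ i) • r + (∑ j ∈ range k, φ ^ j) • s = c)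
    (hu : u = (∑ α ∈ range a, φ ^ (α * k)) • r + φ • (∑ β ∈ range b, φ ^ (β * m)) • s) :
    (∑ i ∈ range m, φ ^ i) • u + s = a • c := by
  set T : ℕ → A := fun i ↦ ∑ j ∈ range i, φ ^ j
  set P := ∑ α ∈ range a, φ ^ (α * k) with hP
  set Q := ∑ β ∈ range b, φ ^ (β * m)
  have hTP : Commute (T m) P := commute_sum_pow φ _ _ _ _
  have hTQ : Commute (T m) Q := commute_sum_pow φ _ _ _ _
  have hTφ : Commute (T m) φ := Commute.sum_left _ _ _ fun j _ ↦ Commute.pow_self φ j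
  calc T m • u + s = (P * T m) • r + (1 + φ * (Q * T m)) • s := by
        rw [hu, smul_add, ← hTP.eq, ← hTQ.eq, ← mul_assoc, ← hTφ.eq, add_smul, one_smul,
          add_comm s, ← add_assoc]
        simp only [mul_smul]
    _ = P • (T m • r + T k • s) := by
        rw [← sum_pow_mul_geom_sum_eq_one_add φ hab, smul_add, mul_smul, mul_smul]
    _ = a • c := by
        rw [hrs, hP, sum_pow_smul_of_smul_eq_self hc, card_range]

end GeomSum

section Frobenius

variable (R : Type*) [CommSemiring R] (p e : ℕ) [ExpChar R p]

/-- The Frobenius map `z ↦ z ^ q` with `q = p ^ e`, as an element of the ring of additive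
endomorphisms of `R`, in which powers and sums of Frobenius maps can be formed. -/
def frobeniusEnd : AddMonoid.End R :=
  (iterateFrobenius R p e).toAddMonoidHom

variable {R}

lemma frobeniusEnd_smul (z : R) : frobeniusEnd R p e • z = z ^ p ^ e := rfl

lemma frobeniusEnd_pow_smul (j : ℕ) (z : R) : frobeniusEnd R p e ^ j • z = z ^ (p ^ e) ^ j := by
  induction j with
  | zero => rw [pow_zero, one_smul, pow_zero, pow_one]
  | succ j ih => rw [pow_succ', mul_smul, ih, frobeniusEnd_smul, ← pow_mul, ← pow_succ]

lemma sum_frobeniusEnd_pow_smul {ι : Type*} (t : Finset ι) (f : ι → ℕ) (z : R) :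
    (∑ i ∈ t, frobeniusEnd R p e ^ f i) • z = ∑ i ∈ t, z ^ (p ^ e) ^ f i := by
  simp only [sum_smul, frobeniusEnd_pow_smul]

lemma add_pow_expChar_pow_pow (j : ℕ) (z w : R) :
    (z + w) ^ (p ^ e) ^ j = z ^ (p ^ e) ^ j + w ^ (p ^ e) ^ j := by
  simp only [← pow_mul, add_pow_expChar_pow]

lemma natCast_pow_expChar_pow_pow (j b : ℕ) : (b : R) ^ (p ^ e) ^ j = b := by
  rw [← pow_mul]
  exact map_natCast (iterateFrobenius R p (e * j)) b

end Frobenius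

section Tr

variable {L : Type*} [CommRing L] (p e : ℕ) [ExpChar L p] {R S u : L} {a b k m : ℕ}

lemma Tr_eq_geom_sum_smul (i : ℕ) (z : L) :
    Tr (p ^ e) i z = (∑ j ∈ range i, frobeniusEnd L p e ^ j) • z :=
  (sum_frobeniusEnd_pow_smul p e _ _ z).symm

theorem Tr_eq_add_natCast (hab : a * k = b * m + 1)
    (hRS : Tr (p ^ e) m R + Tr (p ^ e) k S = 1)
    (hu : u = ∑ α ∈ range a, R ^ (p ^ e) ^ (α * k)
      + (∑ β ∈ range b, S ^ (p ^ e) ^ (β * m)) ^ p ^ e) :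
    Tr (p ^ e) k u = R + b := by
  simp only [Tr_eq_geom_sum_smul, ← sum_frobeniusEnd_pow_smul, ← frobeniusEnd_smul p e] at hRS hu ⊢
  simpa using geom_sum_smul_eq_add_nsmul hab (one_pow _) hRS hu

theorem Tr_add_eq_natCast (hab : a * k = b * m + 1)
    (hRS : Tr (p ^ e) m R + Tr (p ^ e) k S = 1)
    (hu : u = ∑ α ∈ range a, R ^ (p ^ e) ^ (α * k)
      + (∑ β ∈ range b, S ^ (p ^ e) ^ (β * m)) ^ p ^ e) :
    Tr (p ^ e) m u + S = a := by
  simp only [Tr_eq_geom_sum_smul, ← sum_frobeniusEnd_pow_smul, ← frobeniusEnd_smul p e] at hRS hu ⊢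
  simpa using geom_sum_smul_add_eq_nsmul hab (one_pow _) hRS hu

end Tr

section Quotients

variable {G : Type*} [CommGroupWithZero G] {x y : G} {K M : ℕ}

lemma div_pow_div_div_pow_eq_pow_sub_one (hx : x ≠ 0) (hy : y ≠ 0) (hKM : 0 < K * M) :
    (y ^ M / x) ^ K / (y / x ^ K) = y ^ (K * M - 1) := by
  rw [div_pow, ← pow_mul, div_div_div_cancel_right₀ (pow_ne_zero K hx), mul_comm M,
    pow_sub₀ y hy hKM, pow_one, div_eq_mul_inv]

lemma div_div_div_pow_pow_eq_pow_sub_one (hx : x ≠ 0) (hy : y ≠ 0) (hKM : 0 < K * M) :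
    y ^ M / x / (y / x ^ K) ^ M = x ^ (K * M - 1) := by
  rw [div_pow, ← pow_mul, div_div_div_comm, div_self (pow_ne_zero M hy), one_div_div,
    pow_sub₀ x hx hKM, pow_one, div_eq_mul_inv]

end Quotients

/-- For nonzero `x, y` satisfying the defining equation of the tower, with
`R := y/x^{q^k}`, `S := y^{q^{n−k}}/x` and
`u := Σ_{α<a} R^{q^{αk}} + (Σ_{β<b} S^{q^{β(n−k)}})^q`, one has `Tr_k(u) ≠ b`,
`Tr_k(u)^{q^{n−k}} ≠ b`, `y^{q^n−1} = −(Tr_{n−k}(u)^{q^k} − a)/(Tr_k(u) − b)` and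
`x^{q^n−1} = −(Tr_{n−k}(u) − a)/(Tr_k(u)^{q^{n−k}} − b)`. -/
theorem stmt_7 (p e q n k a b : ℕ) (hp : p.Prime) (he : 0 < e) (hq : q = p ^ e)
    (hn : 2 ≤ n) (hk1 : 1 ≤ k) (hkn : k < n) (hab : a * k = b * (n - k) + 1)
    (L : Type*) [Field L] [CharP L p]
    (x y : L) (hx : x ≠ 0) (hy : y ≠ 0)
    (heq : (∑ i ∈ Finset.range (n - k), y ^ q ^ i / x ^ q ^ (k + i))
          + (∑ j ∈ Finset.range k, y ^ q ^ (n - k + j) / x ^ q ^ j) = 1)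
    (R S u : L) (hR : R = y / x ^ q ^ k) (hS : S = y ^ q ^ (n - k) / x)
    (hu : u = (∑ α ∈ Finset.range a, R ^ q ^ (α * k))
              + (∑ β ∈ Finset.range b, S ^ q ^ (β * (n - k))) ^ q) :
    Tr q k u ≠ (b : L) ∧ (Tr q k u) ^ q ^ (n - k) ≠ (b : L) ∧
    y ^ (q ^ n - 1) = -(((Tr q (n - k) u) ^ q ^ k - (a : L)) / (Tr q k u - (b : L))) ∧
    x ^ (q ^ n - 1) = -((Tr q (n - k) u - (a : L)) / ((Tr q k u) ^ q ^ (n - k) - (b : L))) := by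
  subst hq
  obtain ⟨m, rfl⟩ := Nat.exists_eq_add_of_le hkn.le
  rw [Nat.add_sub_cancel_left] at hab heq hS hu ⊢
  have : ExpChar L p := .prime hp
  have hRS : Tr (p ^ e) m R + Tr (p ^ e) k S = 1 := by
    simpa only [Tr, hR, hS, div_pow, ← pow_mul, ← pow_add, mul_add] using heq
  have hTk : Tr (p ^ e) k u = R + b := Tr_eq_add_natCast p e hab hRS hu
  have hTm : Tr (p ^ e) m u + S = a := Tr_add_eq_natCast p e hab hRS hu
  have hTk_pow : Tr (p ^ e) k u ^ (p ^ e) ^ m = R ^ (p ^ e) ^ m + b := by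
    rw [hTk, add_pow_expChar_pow_pow, natCast_pow_expChar_pow_pow]
  have hTm_pow : Tr (p ^ e) m u ^ (p ^ e) ^ k + S ^ (p ^ e) ^ k = a := by
    rw [← add_pow_expChar_pow_pow, hTm, natCast_pow_expChar_pow_pow]
  have hR0 : R ≠ 0 := hR ▸ div_ne_zero hy (pow_ne_zero _ hx)
  have hq_pos : 0 < (p ^ e) ^ k * (p ^ e) ^ m := by have := hp.pos; positivity
  refine ⟨?_, ?_, ?_, ?_⟩
  · simpa only [hTk, ne_eq, add_eq_right] using hR0
  · simpa only [hTk_pow, ne_eq, add_eq_right] using pow_ne_zero _ hR0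
  · rw [← neg_div, neg_sub, ← eq_sub_of_add_eq' hTm_pow, hTk, add_sub_cancel_right, hR, hS, pow_add,
      div_pow_div_div_pow_eq_pow_sub_one hx hy hq_pos]
  · rw [← neg_div, neg_sub, ← eq_sub_of_add_eq' hTm, hTk_pow, add_sub_cancel_right, hR, hS, pow_add,
      div_div_div_pow_pow_eq_pow_sub_one hx hy hq_pos]
end

section
/- Let L be a field of characteristic p containing F_q, where q is a power of p. Let n ≥ 2, 1 ≤ k < n, and a, b nonnegative integers with a·k − b·(n−k) = 1. Let u ∈ L with Tr_{n−k}(u) ≠ a and Tr_k(u) ≠ b, and let V := { s ∈ L : Tr_n(s) · (Tr_{n−k}(u) − a) = Tr_{n−k}(s) · (Tr_n(u) − (a + b)) }. Then the map φ(s) := ( Tr_k(s) / (Tr_k(u) − b) )^q − Tr_k(s) / (Tr_k(u) − b) is injective on V; equivalently, if s ∈ V and φ(s) = 0 then s = 0. -/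
/-!
Put `c = Tr_k(s) / (Tr_k(u) - b)` and `m = n - k`. The condition `φ(s) = 0` says `c ^ q = c`, so
`c` can be pulled out of every trace. Splitting `Tr_n = Tr_m + (Tr_k) ^ q ^ m` in the equation
defining `V` gives `Tr_m(s) = c (Tr_m(u) - a)`. Hence `t = c u - s` has `Tr_k(t) = c b` and
`Tr_m(t) = c a`, both fixed by the `q`-power map. By telescoping, `t` is fixed by the `q ^ k`- and
`q ^ m`-power maps, and `gcd(k, m) = 1` makes it fixed by the `q`-power map itself. Therefore
`k t = b c` and `m t = a c`, a linear system of determinant `b m - a k = -1`, so `t = c = 0` and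
`s = 0`.
-/

section Monoid

variable {M : Type*} [Monoid M] {q : ℕ} {x : M}

theorem pow_pow_eq_self (hx : x ^ q = x) (j : ℕ) : x ^ q ^ j = x := by
  simpa only [Function.IsFixedPt, pow_iterate] using Function.IsFixedPt.iterate (f := (· ^ q)) hx j

theorem pow_eq_self_of_coprime {k m : ℕ} (hkm : k.Coprime m) (hk : x ^ q ^ k = x)
    (hm : x ^ q ^ m = x) : x ^ q = x := by
  have isPeriodicPt {j : ℕ} (hj : x ^ q ^ j = x) : Function.IsPeriodicPt (· ^ q) j x := by
    simpa only [Function.IsPeriodicPt, Function.IsFixedPt, pow_iterate] using hj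
  have hgcd := (isPeriodicPt hk).gcd (isPeriodicPt hm)
  rwa [hkm.gcd_eq_one] at hgcd

end Monoid

theorem natCast_pow_expChar_pow {R : Type*} [CommSemiring R] (p : ℕ) [ExpChar R p] (e r : ℕ) :
    (r : R) ^ p ^ e = r :=
  map_natCast (iterateFrobenius R p e) r

theorem coprime_of_mul_eq_mul_add_one {k m a b : ℕ} (hab : a * k = b * m + 1) : k.Coprime m :=
  have hab' : (a * k : ℤ) = b * m + 1 := mod_cast hab
  Nat.isCoprime_iff_coprime.mp ⟨a, -b, by linear_combination hab'⟩

section Trace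

variable {R : Type*} [CommRing R]

theorem Tr_mul_of_pow_eq_self {q : ℕ} {c : R} (hc : c ^ q = c) (i : ℕ) (x : R) :
    Tr q i (c * x) = c * Tr q i x := by
  simp only [Tr, mul_pow, pow_pow_eq_self hc, Finset.mul_sum]

theorem Tr_of_pow_eq_self {q : ℕ} {x : R} (hx : x ^ q = x) (i : ℕ) : Tr q i x = i * x := by
  simp only [Tr, pow_pow_eq_self hx, Finset.sum_const, Finset.card_range, nsmul_eq_mul]

variable (p e : ℕ) [ExpChar R p]

theorem Tr_sub (i : ℕ) (x y : R) :
    Tr (p ^ e) i (x - y) = Tr (p ^ e) i x - Tr (p ^ e) i y := by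
  simp only [Tr, ← pow_mul, sub_pow_expChar_pow, Finset.sum_sub_distrib]

theorem Tr_add_index (m k : ℕ) (x : R) :
    Tr (p ^ e) (m + k) x = Tr (p ^ e) m x + Tr (p ^ e) k x ^ (p ^ e) ^ m := by
  simp only [Tr, Finset.sum_range_add, ← pow_mul, sum_pow_char_pow, ← pow_add, mul_add, add_comm]

theorem Tr_pow_sub_Tr (i : ℕ) (x : R) :
    Tr (p ^ e) i x ^ p ^ e - Tr (p ^ e) i x = x ^ (p ^ e) ^ i - x := by
  calc Tr (p ^ e) i x ^ p ^ e - Tr (p ^ e) i x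
      = ∑ j ∈ Finset.range i, (x ^ (p ^ e) ^ (j + 1) - x ^ (p ^ e) ^ j) := by
        simp only [Tr, sum_pow_char_pow, Finset.sum_sub_distrib, pow_succ, pow_mul]
    _ = x ^ (p ^ e) ^ i - x := by
        rw [Finset.sum_range_sub (fun j => x ^ (p ^ e) ^ j), pow_zero, pow_one]

variable {p e}

theorem pow_pow_eq_self_of_Tr_pow_eq_self {i : ℕ} {x : R}
    (h : Tr (p ^ e) i x ^ p ^ e = Tr (p ^ e) i x) : x ^ (p ^ e) ^ i = x :=
  sub_eq_zero.mp <| by rw [← Tr_pow_sub_Tr, h, sub_self]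

variable {m k a b : ℕ} {c : R}

theorem eq_zero_and_eq_zero_of_Tr_eq_mul_natCast (hab : a * k = b * m + 1) (hc : c ^ p ^ e = c)
    {t : R} (hk : Tr (p ^ e) k t = c * b) (hm : Tr (p ^ e) m t = c * a) : t = 0 ∧ c = 0 := by
  have mul_natCast_fixed (r : ℕ) : (c * r) ^ p ^ e = c * r := by
    rw [mul_pow, hc, natCast_pow_expChar_pow]
  have ht : t ^ p ^ e = t :=
    pow_eq_self_of_coprime (coprime_of_mul_eq_mul_add_one hab)
      (pow_pow_eq_self_of_Tr_pow_eq_self (by rw [hk, mul_natCast_fixed]))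
      (pow_pow_eq_self_of_Tr_pow_eq_self (by rw [hm, mul_natCast_fixed]))
  rw [Tr_of_pow_eq_self ht] at hk hm
  have hab_cast : (a : R) * k = b * m + 1 := mod_cast congrArg (Nat.cast : ℕ → R) hab
  constructor
  · linear_combination (a : R) * hk - b * hm - t * hab_cast
  · linear_combination (m : R) * hk - k * hm - c * hab_cast

variable {s u : R}

theorem Tr_eq_mul_sub_natCast (hb : IsRightRegular (Tr (p ^ e) k u - b)) (hc : c ^ p ^ e = c)
    (hk : Tr (p ^ e) k s = c * (Tr (p ^ e) k u - b))
    (hs : Tr (p ^ e) (m + k) s * (Tr (p ^ e) m u - a)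
      = Tr (p ^ e) m s * (Tr (p ^ e) (m + k) u - (a + b))) :
    Tr (p ^ e) m s = c * (Tr (p ^ e) m u - a) := by
  have hpow : (Tr (p ^ e) k u - b) ^ (p ^ e) ^ m = Tr (p ^ e) k u ^ (p ^ e) ^ m - b := by
    rw [← pow_mul, sub_pow_expChar_pow, natCast_pow_expChar_pow]
  rw [Tr_add_index, Tr_add_index, hk, mul_pow, pow_pow_eq_self hc] at hs
  apply hb.pow ((p ^ e) ^ m)
  linear_combination Tr (p ^ e) m s * hpow - hs

theorem eq_zero_of_Tr_eq_mul (hab : a * k = b * m + 1)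
    (hb : IsRightRegular (Tr (p ^ e) k u - b)) (hc : c ^ p ^ e = c)
    (hk : Tr (p ^ e) k s = c * (Tr (p ^ e) k u - b))
    (hs : Tr (p ^ e) (m + k) s * (Tr (p ^ e) m u - a)
      = Tr (p ^ e) m s * (Tr (p ^ e) (m + k) u - (a + b))) :
    s = 0 := by
  have hm : Tr (p ^ e) m s = c * (Tr (p ^ e) m u - a) := Tr_eq_mul_sub_natCast hb hc hk hs
  have ⟨ht, hc₀⟩ : c * u - s = 0 ∧ c = 0 :=
    eq_zero_and_eq_zero_of_Tr_eq_mul_natCast hab hc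
      (by rw [Tr_sub, Tr_mul_of_pow_eq_self hc, hk]; ring)
      (by rw [Tr_sub, Tr_mul_of_pow_eq_self hc, hm]; ring)
  linear_combination u * hc₀ - ht

end Trace

theorem stmt_15_general (p e q n k a b : ℕ) (hq : q = p ^ e) (hkn : k ≤ n)
    (hab : a * k = b * (n - k) + 1) (L : Type*) [Field L] [ExpChar L p]
    (u : L) (hub : Tr q k u ≠ (b : L)) (V : Set L)
    (hV : V = {s : L | Tr q n s * (Tr q (n - k) u - (a : L))
                       = Tr q (n - k) s * (Tr q n u - ((a : L) + (b : L)))})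
    (φ : L → L)
    (hφ : φ = fun s => (Tr q k s / (Tr q k u - (b : L))) ^ q
                       - Tr q k s / (Tr q k u - (b : L))) :
    Set.InjOn φ V ∧ ∀ s ∈ V, φ s = 0 → s = 0 := by
  obtain ⟨m, rfl⟩ : ∃ m, n = m + k := ⟨n - k, (Nat.sub_add_cancel hkn).symm⟩
  rw [Nat.add_sub_cancel] at hab hV
  subst hq
  have hb : Tr (p ^ e) k u - (b : L) ≠ 0 := sub_ne_zero.mpr hub
  have trivial_kernel : ∀ s ∈ V, φ s = 0 → s = 0 := by
    subst hV hφ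
    exact fun s hs hφs => eq_zero_of_Tr_eq_mul hab (IsRegular.of_ne_zero hb).right
      (sub_eq_zero.mp hφs) (div_mul_cancel₀ _ hb).symm hs
  refine ⟨fun x hx y hy hxy => sub_eq_zero.mp (trivial_kernel (x - y) ?_ ?_), trivial_kernel⟩
  · simp only [hV, Set.mem_ofPred_eq, Tr_sub] at hx hy ⊢
    linear_combination hx - hy
  · simp only [hφ, Tr_sub, sub_div, sub_pow_expChar_pow] at hxy ⊢
    linear_combination hxy

/-- For a field `L ⊇ F_q` and `u` with `Tr_{n−k}(u) ≠ a`, `Tr_k(u) ≠ b`,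
the map `φ(s) = (Tr_k(s)/(Tr_k(u) − b))^q − Tr_k(s)/(Tr_k(u) − b)` is injective on
`V = {s : Tr_n(s)·(Tr_{n−k}(u) − a) = Tr_{n−k}(s)·(Tr_n(u) − (a+b))}`; equivalently,
if `s ∈ V` and `φ(s) = 0` then `s = 0`. -/
theorem stmt_15 (p e q n k a b : ℕ) (hp : p.Prime) (he : 0 < e) (hq : q = p ^ e)
    (hn : 2 ≤ n) (hk1 : 1 ≤ k) (hkn : k < n) (hab : a * k = b * (n - k) + 1)
    (Fq : Type*) [Field Fq] [Fintype Fq] (hcard : Fintype.card Fq = q)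
    (L : Type*) [Field L] [Algebra Fq L]
    (u : L) (hua : Tr q (n - k) u ≠ (a : L)) (hub : Tr q k u ≠ (b : L))
    (V : Set L)
    (hV : V = {s : L | Tr q n s * (Tr q (n - k) u - (a : L))
                       = Tr q (n - k) s * (Tr q n u - ((a : L) + (b : L)))})
    (φ : L → L)
    (hφ : φ = fun s => (Tr q k s / (Tr q k u - (b : L))) ^ q
                       - Tr q k s / (Tr q k u - (b : L))) :
    Set.InjOn φ V ∧ ∀ s ∈ V, φ s = 0 → s = 0 := by
  have : Fact p.Prime := ⟨hp⟩
  have : CharP Fq p := charP_of_card_eq_prime_pow (hcard.trans hq)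
  have : CharP L p := charP_of_injective_algebraMap' Fq p
  exact stmt_15_general p e q n k a b hq hkn.le hab L u hub V hV φ hφ
end
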